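/- Let A = (a_{ij}) be a d×n integer matrix of rank d with nonzero columns a₁,…,aₙ ∈ ℤ^d such that ℕA is pointed and ℤA = ℤ^d, and let L ∈ ℚⁿ be any weight vector. Then the Euler operators E₁,…,E_d, E_i = Σ_{j=1}^n a_{ij} x_j ∂_j, form a linear system of parameters on ℂ(x)[∂₁,…,∂ₙ]/in_L(I_A): the Krull dimension of ℂ(x)[∂₁,…,∂ₙ]/(in_L(I_A)·ℂ(x)[∂]) equals d, and the Krull dimension of ℂ(x)[∂₁,…,∂ₙ]/( in_L(I_A)·ℂ(x)[∂] + ⟨E₁,…,E_d⟩ ) equals 0. -/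

import Mathlib

/-!
Write `K = ℂ(x)`. The three ingredients are upper bounds for both dimensions, properness of the
bigger ideal, and a `d`-dimensional subvariety of the zero set of `in_L(I_A)`.

*Upper bounds.* Let `ξ` be the generic point of a subvariety of the zero set of `in_L(I_A)`, and let
`σ` be the set of `j` with `ξ_j ≠ 0`. If `Au = Av` with `u`, `v` supported on `σ`, then
`ξ^u = ξ^v` (`monomial_eval_eq`): otherwise one of `∂^u`, `∂^v`, `∂^u - ∂^v` is an element of
`in_L(I_A)` not vanishing at `ξ`. Hence, if the columns indexed by `b ⊆ σ` form a basis of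
the rational span of those indexed by `σ`, every `ξ_j` is algebraic over the field generated by
the `ξ_k`, `k ∈ b` (`isAlgebraic_of_mem_span`). As `|b| ≤ d`, the field `K(ξ)` has transcendence
degree at most `d` over `K`.

If moreover the Euler operators vanish at `ξ`, then `K(ξ)` is algebraic over `ℂ(ξ_b, x_{bᶜ})`,
because the Euler equations can be solved for `x_k`, `k ∈ b`. So `K(ξ)` has transcendence degree at
most `n` over `ℂ`; as `K` already has transcendence degree `n`, `K(ξ)` is algebraic over `K`
(`isAlgebraic_of_aeval_euler_eq_zero`). Thus every prime containing `in_L(I_A)` and the Euler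
operators is maximal.

*Properness.* Since `ℕA` is pointed, `I_A` has no constant terms, so all generators vanish at the
origin (`nontrivial_quotient_euler`).

*Lower bound.* The polyhedron `{w | w · a_j ≤ L_j for all j}` has a vertex `w`, since the columns lie in
an open half space and span `ℚ^d` (`exists_vertex`). The columns indexed by
`σ = {j | w · a_j = L_j}` span `ℚ^d`, and `in_L(I_A)` vanishes on the torus orbit closure
parametrized by `∂_j ↦ t^{a_j}` for `j ∈ σ` and `∂_j ↦ 0` for `j ∉ σ`
(`torusHom_eq_zero_of_mem_grIdealFrac`), which has dimension `d`.
-/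

open MvPolynomial CategoryTheory

noncomputable section

/-- The set of columns of an integer matrix. -/
def cols {d n : ℕ} (A : Matrix (Fin d) (Fin n) ℤ) : Set (Fin d → ℤ) :=
  Set.range fun j i => A i j

/-- The affine semigroup `ℕA` generated by the columns of `A` is pointed. -/
def IsPointed {d n : ℕ} (A : Matrix (Fin d) (Fin n) ℤ) : Prop :=
  ∀ v ∈ AddSubmonoid.closure (cols A),
    -v ∈ AddSubmonoid.closure (cols A) → v = 0

/-- The toric ideal `I_A ⊆ ℂ[∂₁,…,∂ₙ]`, generated by the binomials
`∂^u - ∂^v` with `Au = Av`. -/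
def toricIdeal {d n : ℕ} (A : Matrix (Fin d) (Fin n) ℤ) :
    Ideal (MvPolynomial (Fin n) ℂ) :=
  Ideal.span { f | ∃ u v : Fin n →₀ ℕ,
    A.mulVec (fun j => (u j : ℤ)) = A.mulVec (fun j => (v j : ℤ)) ∧
    f = monomial u 1 - monomial v 1 }

/-- The `L`-weight of an exponent vector. -/
def wt {n : ℕ} (L : Fin n → ℚ) (u : Fin n →₀ ℕ) : ℚ := ∑ j, L j * (u j : ℚ)

/-- The `L`-initial form of a polynomial: the sum of its terms of maximal `L`-weight. -/
def initialForm {n : ℕ} (L : Fin n → ℚ) (f : MvPolynomial (Fin n) ℂ) :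
    MvPolynomial (Fin n) ℂ :=
  ∑ u ∈ f.support.filter fun u => ∀ v ∈ f.support, wt L v ≤ wt L u,
    monomial u (f.coeff u)

/-- The `L`-initial ideal `in_L(I)` of an ideal `I ⊆ ℂ[∂₁,…,∂ₙ]`. -/
def initialIdeal {n : ℕ} (L : Fin n → ℚ) (I : Ideal (MvPolynomial (Fin n) ℂ)) :
    Ideal (MvPolynomial (Fin n) ℂ) :=
  Ideal.span { g | ∃ f ∈ I, f ≠ 0 ∧ g = initialForm L f }

/-- The depth of a Noetherian local ring `R`, i.e. `inf { i | Ext^i_R(R/m, R) ≠ 0 }`. -/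
def ringDepth (R : Type) [CommRing R] [IsLocalRing R] : ℕ∞ :=
  sInf { i : ℕ∞ | ∃ m : ℕ, i = m ∧
    Nontrivial (((Ext R (ModuleCat.{0} R) m).obj
        (Opposite.op (ModuleCat.of R (R ⧸ IsLocalRing.maximalIdeal R)))).obj
      (ModuleCat.of R R)) }

/-- A commutative ring `T` is Cohen–Macaulay if for every prime ideal `p`, the
localization `T_p` satisfies `depth = Krull dimension`. -/
def IsCohenMacaulayRing (T : Type) [CommRing T] : Prop :=
  ∀ (p : Ideal T) [p.IsPrime],
    (ringDepth (Localization.AtPrime p) : WithBot ℕ∞) =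
      ringKrullDim (Localization.AtPrime p)

/-- The Euler operator `E_i = ∑ⱼ a_{ij} xⱼ ∂ⱼ` as an element of `ℂ[x,∂]`,
where `x_j = X (Sum.inl j)` and `∂_j = X (Sum.inr j)`. -/
def eulerXD {d n : ℕ} (A : Matrix (Fin d) (Fin n) ℤ) (i : Fin d) :
    MvPolynomial (Fin n ⊕ Fin n) ℂ :=
  ∑ j, (A i j : MvPolynomial (Fin n ⊕ Fin n) ℂ) * X (Sum.inl j) * X (Sum.inr j)

/-- The inclusion `ℂ[∂] → K[∂]`, for `K` an algebra over `ℂ[x₁,…,xₙ]`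
(in practice `K = ℂ(x₁,…,xₙ)`), sending `∂ⱼ` to `∂ⱼ`. -/
def toFracPoly (n : ℕ) (K : Type) [CommRing K] [Algebra (MvPolynomial (Fin n) ℂ) K] :
    MvPolynomial (Fin n) ℂ →+* MvPolynomial (Fin n) K :=
  MvPolynomial.map ((algebraMap (MvPolynomial (Fin n) ℂ) K).comp (C : ℂ →+* _))

/-- The Euler operator `E_i = ∑ⱼ a_{ij} xⱼ ∂ⱼ` as an element of `K[∂]`
(in practice `K = ℂ(x₁,…,xₙ)`, and the `xⱼ` act as scalars). -/
def eulerFrac {d n : ℕ} (A : Matrix (Fin d) (Fin n) ℤ) (K : Type) [CommRing K]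
    [Algebra (MvPolynomial (Fin n) ℂ) K] (i : Fin d) : MvPolynomial (Fin n) K :=
  ∑ j, C (algebraMap (MvPolynomial (Fin n) ℂ) K (X j)) *
    (A i j : MvPolynomial (Fin n) K) * X j

/-- The extension `in_L(I_A)·ℂ[x,∂]` of the initial ideal of the toric ideal to
`ℂ[x,∂]`, where `x_j = X (Sum.inl j)` and `∂_j = X (Sum.inr j)`. -/
def grIdealXD {d n : ℕ} (A : Matrix (Fin d) (Fin n) ℤ) (L : Fin n → ℚ) :
    Ideal (MvPolynomial (Fin n ⊕ Fin n) ℂ) :=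
  Ideal.map (rename (Sum.inr : Fin n → Fin n ⊕ Fin n)) (initialIdeal L (toricIdeal A))

/-- The extension `in_L(I_A)·K[∂]` of the initial ideal of the toric ideal to `K[∂]`
(in practice `K = ℂ(x₁,…,xₙ)`). -/
def grIdealFrac {d n : ℕ} (A : Matrix (Fin d) (Fin n) ℤ) (L : Fin n → ℚ) (K : Type)
    [CommRing K] [Algebra (MvPolynomial (Fin n) ℂ) K] : Ideal (MvPolynomial (Fin n) K) :=
  Ideal.map (toFracPoly n K) (initialIdeal L (toricIdeal A))

/-! ### Elements of the initial ideal and relations on its zero set -/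

/-- The initial form keeps the coefficients of the terms of maximal weight and kills the others. -/
theorem initialForm_coeff {n : ℕ} (L : Fin n → ℚ) (f : MvPolynomial (Fin n) ℂ) (u : Fin n →₀ ℕ) :
    (initialForm L f).coeff u =
      open Classical in if ∀ v ∈ f.support, wt L v ≤ wt L u then f.coeff u else 0 := by
  classical
  unfold initialForm
  simp only [coeff_sum, coeff_monomial, Finset.sum_ite_eq', Finset.mem_filter, mem_support_iff]
  by_cases h : coeff u f = 0 <;> simp [h]

theorem monomial_mem_initialIdeal {n d : ℕ} (A : Matrix (Fin d) (Fin n) ℤ) (L : Fin n → ℚ)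
    (u v : Fin n →₀ ℕ)
    (h : A.mulVec (fun j => (u j : ℤ)) = A.mulVec (fun j => (v j : ℤ))) (hw : wt L v < wt L u) :
    monomial u 1 ∈ initialIdeal L (toricIdeal A) := by
  classical
  have huv : u ≠ v := by rintro rfl; exact lt_irrefl _ hw
  refine Ideal.subset_span ⟨monomial u 1 - monomial v 1, Ideal.subset_span ⟨u, v, h, rfl⟩, ?_, ?_⟩
  · intro h0
    have := congrArg (coeff u) h0
    simp [coeff_monomial, huv.symm] at this
  · ext w
    have hsupp : ∀ x, x ∈ (monomial u (1 : ℂ) - monomial v 1).support ↔ x = u ∨ x = v := by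
      intro x
      rw [mem_support_iff, coeff_sub, coeff_monomial, coeff_monomial]
      by_cases h1 : u = x
      · subst h1; simp [huv.symm]
      · by_cases h2 : v = x
        · subst h2; simp [h1]
        · simp [h1, h2, Ne.symm h1, Ne.symm h2]
    rw [initialForm_coeff]
    by_cases h1 : w = u
    · rw [if_pos]
      · subst h1; simp [coeff_monomial, huv.symm]
      · intro x hx
        rcases (hsupp x).1 hx with rfl | rfl
        · rw [h1]
        · rw [h1]; exact hw.le
    · rw [coeff_monomial, if_neg (Ne.symm h1)]
      split_ifs with hmax
      · by_contra hne
        rcases (hsupp w).1 (mem_support_iff.2 (Ne.symm hne)) with h2 | h2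
        · exact h1 h2
        · exact absurd (hmax u ((hsupp u).2 (Or.inl rfl))) (by rw [h2]; exact not_le.2 hw)
      · rfl

theorem binomial_mem_initialIdeal {n d : ℕ} (A : Matrix (Fin d) (Fin n) ℤ) (L : Fin n → ℚ)
    (u v : Fin n →₀ ℕ)
    (h : A.mulVec (fun j => (u j : ℤ)) = A.mulVec (fun j => (v j : ℤ))) (hw : wt L v = wt L u) :
    monomial u 1 - monomial v 1 ∈ initialIdeal L (toricIdeal A) := by
  classical
  by_cases huv : u = v
  · subst huv; simp
  refine Ideal.subset_span ⟨monomial u 1 - monomial v 1, Ideal.subset_span ⟨u, v, h, rfl⟩, ?_, ?_⟩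
  · intro h0
    have := congrArg (coeff u) h0
    simp [coeff_monomial, Ne.symm huv] at this
  · ext w
    rw [initialForm_coeff]
    split_ifs with h1
    · rfl
    · push Not at h1
      obtain ⟨x, hx, hlt⟩ := h1
      simp only [coeff_sub, coeff_monomial, mem_support_iff] at hx ⊢
      by_cases hu : u = w
      · subst hu
        by_cases h2 : u = x
        · subst h2; exact absurd hlt (lt_irrefl _)
        · by_cases h3 : v = x
          · subst h3; exact absurd hlt (by rw [hw]; exact lt_irrefl _)
          · simp [h2, h3] at hx
      · by_cases hv : v = w
        · subst hv
          by_cases h2 : u = x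
          · subst h2; exact absurd hlt (by rw [hw]; exact lt_irrefl _)
          · by_cases h3 : v = x
            · subst h3; exact absurd hlt (lt_irrefl _)
            · simp [h2, h3] at hx
        · simp [hu, hv]

/-- On a zero of `in_L(I_A)` with coordinates in a field, two monomials of the same `A`-degree
that involve only nonvanishing coordinates take the same value.

If their weights differed, the monomial of larger weight would lie in `in_L(I_A)`, although it does
not vanish at the point; hence the binomial itself is its own initial form. -/
theorem monomial_eval_eq {n d : ℕ} (A : Matrix (Fin d) (Fin n) ℤ) (L : Fin n → ℚ)
    {K : Type} [Field K] [Algebra (MvPolynomial (Fin n) ℂ) K] {F : Type} [Field F] [Algebra K F]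
    (ξ : Fin n → F) (hξ : ∀ f ∈ grIdealFrac A L K, aeval ξ f = 0) (u v : Fin n →₀ ℕ)
    (h : A.mulVec (fun j => (u j : ℤ)) = A.mulVec (fun j => (v j : ℤ)))
    (hu : ∀ j, ξ j = 0 → u j = 0) (hv : ∀ j, ξ j = 0 → v j = 0) :
    ∏ j, ξ j ^ u j = ∏ j, ξ j ^ v j := by
  have key : ∀ w : Fin n →₀ ℕ, aeval ξ (toFracPoly n K (monomial w 1)) = ∏ j, ξ j ^ w j := by
    intro w
    rw [toFracPoly, map_monomial, map_one, aeval_monomial, map_one, one_mul,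
      Finsupp.prod_fintype _ _ (by simp)]
  have nz : ∀ w : Fin n →₀ ℕ, (∀ j, ξ j = 0 → w j = 0) → ∏ j, ξ j ^ w j ≠ 0 := by
    intro w hw
    refine Finset.prod_ne_zero_iff.2 fun j _ => ?_
    by_cases h0 : ξ j = 0
    · simp [hw j h0]
    · exact pow_ne_zero _ h0
  have mem : ∀ f ∈ initialIdeal L (toricIdeal A), aeval ξ (toFracPoly n K f) = 0 :=
    fun f hf => hξ _ (Ideal.mem_map_of_mem _ hf)
  rcases lt_trichotomy (wt L v) (wt L u) with hw | hw | hw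
  · exact absurd (by rw [← key]; exact mem _ (monomial_mem_initialIdeal A L u v h hw)) (nz u hu)
  · have := mem _ (binomial_mem_initialIdeal A L u v h hw)
    rwa [map_sub, map_sub, key, key, sub_eq_zero] at this
  · exact absurd (by rw [← key]; exact mem _ (monomial_mem_initialIdeal A L v u h.symm hw)) (nz v hv)

/-- A finite family of rational numbers has a common denominator. -/
theorem exists_common_denominator {ι : Type*} [Finite ι] (q : ι → ℚ) :
    ∃ N : ℕ, 0 < N ∧ ∃ m : ι → ℤ, ∀ i, (m i : ℚ) = N * q i := by
  classical
  have := Fintype.ofFinite ι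
  refine ⟨∏ i, (q i).den, Finset.prod_pos fun i _ => (q i).den_pos,
    fun i => (q i).num * ∏ k ∈ Finset.univ.erase i, ((q k).den : ℤ), fun i => ?_⟩
  rw [← Finset.mul_prod_erase _ _ (Finset.mem_univ i)]
  push_cast
  have := Rat.mul_den_eq_num (q i)
  linear_combination (-∏ k ∈ Finset.univ.erase i, ((q k).den : ℚ)) * this

/-- The `j`-th column of `A`, as a rational vector. -/
def ratCol {d n : ℕ} (A : Matrix (Fin d) (Fin n) ℤ) (j : Fin n) : Fin d → ℚ := fun i => (A i j : ℚ)

/-- If the column `a_j` is a rational combination of the columns indexed by `b`, then some relation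
`ξ_j ^ N * ξ ^ m⁻ = ξ ^ m⁺` with `N > 0` makes `ξ_j` algebraic over any ring over which the
`ξ_k`, `k ∈ b`, are algebraic. -/
theorem isAlgebraic_of_mem_span {n d : ℕ} (A : Matrix (Fin d) (Fin n) ℤ)
    {F : Type} [Field F] (ξ : Fin n → F)
    (hξ : ∀ u v : Fin n →₀ ℕ, A.mulVec (fun j => (u j : ℤ)) = A.mulVec (fun j => (v j : ℤ)) →
      (∀ j, ξ j = 0 → u j = 0) → (∀ j, ξ j = 0 → v j = 0) →
      ∏ j, ξ j ^ u j = ∏ j, ξ j ^ v j)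
    (b : Set (Fin n)) (hb : ∀ j ∈ b, ξ j ≠ 0) (j : Fin n)
    (hj : ratCol A j ∈ Submodule.span ℚ (ratCol A '' b))
    {R : Type} [CommRing R] [IsDomain R] [Algebra R F] (hR : ∀ k ∈ b, IsAlgebraic R (ξ k)) :
    IsAlgebraic R (ξ j) := by
  classical
  by_cases h0 : ξ j = 0
  · rw [h0]; exact isAlgebraic_zero
  obtain ⟨c, hcb, hc⟩ := (Finsupp.mem_span_image_iff_linearCombination ℚ).1 hj
  rw [Finsupp.linearCombination_apply, Finsupp.sum_fintype _ _ (by simp)] at hc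
  obtain ⟨N, hN, m, hm⟩ := exists_common_denominator c
  have hmb : ∀ k, k ∉ b → m k = 0 := by
    intro k hk
    have : c k = 0 := by
      by_contra hne
      exact hk (hcb (Finsupp.mem_support_iff.2 hne))
    have h1 := hm k
    rw [this, mul_zero] at h1
    exact_mod_cast h1
  have h0b : ∀ k, ξ k = 0 → k ∉ b := fun k hk hkb => hb k hkb hk
  have hrel : ∀ i, (N : ℤ) * A i j = ∑ k, m k * A i k := by
    intro i
    have h1 := congrFun hc i
    simp only [Finset.sum_apply, Pi.smul_apply, smul_eq_mul, ratCol] at h1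
    have : ((N * A i j : ℤ) : ℚ) = ((∑ k, m k * A i k : ℤ) : ℚ) := by
      push_cast
      rw [← h1, Finset.mul_sum]
      exact Finset.sum_congr rfl fun k _ => by rw [hm k]; ring
    exact_mod_cast this
  have key := hξ (Finsupp.equivFunOnFinite.symm fun k => (if k = j then N else 0) + (-m k).toNat)
    (Finsupp.equivFunOnFinite.symm fun k => (m k).toNat) (by
      ext i
      simp only [Matrix.mulVec, dotProduct, Finsupp.equivFunOnFinite_symm_apply_apply]
      have h1 : ∑ k, A i k * (((if k = j then N else 0) : ℕ) : ℤ) = N * A i j := by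
        simp [mul_comm]
      push_cast at h1 ⊢
      simp only [mul_add, Finset.sum_add_distrib]
      rw [h1, hrel, ← Finset.sum_add_distrib]
      refine Finset.sum_congr rfl fun k _ => ?_
      have : m k = ((m k).toNat : ℤ) - ((-m k).toNat : ℤ) := by omega
      linear_combination A i k * this) (by
      intro k hk
      have : k ≠ j := by rintro rfl; exact h0 hk
      simp [this, hmb k (h0b k hk)]) (by
      intro k hk
      simp [hmb k (h0b k hk)])
  simp only [Finsupp.equivFunOnFinite_symm_apply_apply, pow_add, Finset.prod_mul_distrib] at key
  have h1 : ∏ k, ξ k ^ (if k = j then N else 0) = ξ j ^ N := by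
    simp [pow_ite]
  have halg : ∀ e : Fin n → ℕ, (∀ k, k ∉ b → e k = 0) → IsAlgebraic R (∏ k, ξ k ^ e k) := by
    intro e he
    refine Finset.prod_induction _ (IsAlgebraic R) (fun _ _ => IsAlgebraic.mul) isAlgebraic_one ?_
    intro k _
    by_cases hk : k ∈ b
    · exact (hR k hk).pow _
    · rw [he k hk, pow_zero]; exact isAlgebraic_one
  have hne : ∏ k, ξ k ^ (-m k).toNat ≠ 0 := by
    refine Finset.prod_ne_zero_iff.2 fun k _ => ?_
    by_cases hk : k ∈ b
    · exact pow_ne_zero _ (hb k hk)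
    · simp [hmb k hk]
  rw [h1, ← eq_div_iff hne, div_eq_mul_inv] at key
  refine IsAlgebraic.of_pow hN (n := N) ?_
  rw [key]
  exact (halg _ fun k hk => by simp [hmb k hk]).mul (halg _ fun k hk => by simp [hmb k hk]).inv

/-- Among the columns of `A` indexed by `σ` there is a basis of their rational span. -/
theorem exists_basis_columns {n d : ℕ} (A : Matrix (Fin d) (Fin n) ℤ) (σ : Set (Fin n)) :
    ∃ b : Set (Fin n), b ⊆ σ ∧ LinearIndepOn ℚ (ratCol A) b ∧
      ∀ j ∈ σ, ratCol A j ∈ Submodule.span ℚ (ratCol A '' b) := by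
  obtain ⟨b, hbσ, -, hspan, hli⟩ := exists_linearIndepOn_extension
    (K := ℚ) (v := ratCol A) (linearIndepOn_empty ℚ _) (Set.empty_subset σ)
  exact ⟨b, hbσ, hli, fun j hj => hspan ⟨j, hj, rfl⟩⟩

/-- For linearly independent columns indexed by `b` and `k ∈ b`, some rational combination of the
rows of `A` has entry `1` in column `k` and `0` in the other columns of `b`. -/
theorem exists_dual_functional {n d : ℕ} (A : Matrix (Fin d) (Fin n) ℤ) (b : Set (Fin n))
    (hb : LinearIndepOn ℚ (ratCol A) b) (k : Fin n) (hk : k ∈ b) :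
    ∃ c : Fin d → ℚ, ∑ i, c i * A i k = 1 ∧ ∀ j ∈ b, j ≠ k → ∑ i, c i * A i j = 0 := by
  classical
  let B := Module.Basis.span hb
  obtain ⟨g, hg⟩ := LinearMap.exists_extend (B.coord ⟨k, hk⟩)
  have hval : ∀ j (hj : j ∈ b), ∑ i, g (Pi.single i 1) * A i j = if j = k then 1 else 0 := by
    intro j hj
    have h1 : g (ratCol A j) = ∑ i, g (Pi.single i 1) * A i j := by
      conv_lhs => rw [← Finset.univ_sum_single (ratCol A j)]
      rw [map_sum]
      refine Finset.sum_congr rfl fun i _ => ?_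
      have : (Pi.single i (ratCol A j i) : Fin d → ℚ) = (A i j : ℚ) • Pi.single i 1 := by
        rw [← Pi.single_smul]; simp [ratCol]
      rw [this, map_smul, smul_eq_mul, mul_comm]
    have h2 := LinearMap.congr_fun hg (B ⟨j, hj⟩)
    rw [Module.Basis.coord_apply, Module.Basis.repr_self, LinearMap.comp_apply] at h2
    have h3 : (Submodule.subtype _ (B ⟨j, hj⟩) : Fin d → ℚ) = ratCol A j := by
      exact congrArg Subtype.val (Module.Basis.span_apply hb ⟨j, hj⟩)
    rw [← h1, ← h3, h2, Finsupp.single_apply]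
    simp
  refine ⟨fun i => g (Pi.single i 1), by simpa using hval k hk, fun j hj hjk => ?_⟩
  simpa [hjk] using hval j hj

/-! ### Krull dimension and transcendence degree -/

/-- Krull dimension is preserved by injective integral ring maps: chains of primes lift by lying over
and going up, and they contract to strict chains by incomparability. -/
theorem ringKrullDim_eq_of_integral_injective {R S : Type} [CommRing R] [CommRing S]
    (f : R →+* S) (hf : Function.Injective f) (hint : f.IsIntegral) :
    ringKrullDim S = ringKrullDim R := by
  algebraize [f]
  have : Algebra.IsIntegral R S := ⟨hint⟩
  apply le_antisymm
  · refine Order.krullDim_le_of_strictMono (PrimeSpectrum.comap (algebraMap R S)) ?_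
    intro P Q h
    exact Ideal.IsIntegral.comap_lt_comap (R := R) h
  · refine iSup_le fun l => ?_
    obtain ⟨P, hP⟩ := RingHom.IsIntegral.comap_surjective hint hf l.head
    have : P.asIdeal.LiesOver l.head.asIdeal := ⟨by rw [← hP]; rfl⟩
    obtain ⟨M, hM, -, -⟩ := Ideal.exists_ltSeries_of_hasGoingUp l P.asIdeal
    rw [← hM]
    exact le_iSup (fun p : LTSeries (PrimeSpectrum S) => (p.length : WithBot ℕ∞)) M

theorem ringKrullDim_mvPolynomial_fin (k : Type) [Field k] (s : ℕ) :
    ringKrullDim (MvPolynomial (Fin s) k) = s := by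
  rw [MvPolynomial.ringKrullDim_of_isNoetherianRing, ringKrullDim_eq_zero_of_field]
  simp

/-- For a domain finitely generated over a field, Krull dimension and transcendence degree
are equal (and finite). -/
theorem exists_ringKrullDim_eq_trdeg (k B : Type) [Field k] [CommRing B] [IsDomain B] [Algebra k B]
    [Algebra.FiniteType k B] :
    ∃ s : ℕ, ringKrullDim B = s ∧ Algebra.trdeg k B = s := by
  obtain ⟨s, g, hinj, hint⟩ := exists_integral_inj_algHom_of_fg k B
  refine ⟨s, ?_, ?_⟩
  · rw [ringKrullDim_eq_of_integral_injective g.toRingHom hinj hint,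
      ringKrullDim_mvPolynomial_fin]
  · algebraize [g.toRingHom]
    have : IsScalarTower k (MvPolynomial (Fin s) k) B :=
      IsScalarTower.of_algebraMap_eq fun x => (g.commutes x).symm
    have : Algebra.IsIntegral (MvPolynomial (Fin s) k) B := ⟨hint⟩
    have : FaithfulSMul (MvPolynomial (Fin s) k) B :=
      (faithfulSMul_iff_algebraMap_injective _ _).2 hinj
    rw [← trdeg_add_eq k (MvPolynomial (Fin s) k), trdeg_eq_zero (A := B),
      MvPolynomial.trdeg_of_isDomain]
    simp

/-- A bound on the transcendence degrees of the residue domains of a finitely generated algebra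
bounds its Krull dimension, by Noether normalization. -/
theorem ringKrullDim_le_of_forall_trdeg_le (k T : Type) [Field k] [CommRing T] [Nontrivial T]
    [Algebra k T] [Algebra.FiniteType k T] (d : ℕ)
    (h : ∀ P : Ideal T, P.IsPrime → Algebra.trdeg k (T ⧸ P) ≤ d) : ringKrullDim T ≤ d := by
  obtain ⟨s, g, hinj, hint⟩ := exists_integral_inj_algHom_of_fg k T
  rw [ringKrullDim_eq_of_integral_injective g.toRingHom hinj hint, ringKrullDim_mvPolynomial_fin]
  -- a prime of `T` lying over `0` contributes `s` algebraically independent elements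
  obtain ⟨P, hP⟩ := RingHom.IsIntegral.comap_surjective hint hinj ⟨⊥, Ideal.isPrime_bot⟩
  have hP' : P.asIdeal.comap g.toRingHom = ⊥ := congrArg PrimeSpectrum.asIdeal hP
  have hinj' : Function.Injective ((Ideal.Quotient.mkₐ k P.asIdeal).comp g) := by
    rw [injective_iff_map_eq_zero]
    intro a ha
    have h2 : g a ∈ P.asIdeal := Ideal.Quotient.eq_zero_iff_mem.1 ha
    have : a ∈ P.asIdeal.comap g.toRingHom := h2
    rwa [hP', Ideal.mem_bot] at this
  have h1 := (trdeg_le_of_injective _ hinj').trans (h P.asIdeal P.isPrime)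
  rw [MvPolynomial.trdeg_of_isDomain] at h1
  have : s ≤ d := by simpa using h1
  exact_mod_cast this

/-! ### The generic point of a component -/

/-- A field of rational expressions in the `ξ_j` over `K` is algebraic over `R` as soon as the `ξ_j`
and the elements of `K` are. Only `R → F` is given: `K` need not be an `R`-algebra. -/
theorem isAlgebraic_of_generators {n : ℕ} {K F : Type} [Field K] [Field F] [Algebra K F]
    (ξ : Fin n → F) (hgen : ∀ z : F, ∃ p q : MvPolynomial (Fin n) K, z = aeval ξ p / aeval ξ q)
    {R : Type} [CommRing R] [IsDomain R] [Algebra R F]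
    (hK : ∀ c : K, IsAlgebraic R (algebraMap K F c)) (hξ : ∀ j, IsAlgebraic R (ξ j)) :
    Algebra.IsAlgebraic R F := by
  have h : ∀ p : MvPolynomial (Fin n) K, IsAlgebraic R (aeval ξ p) := by
    intro p
    induction p using MvPolynomial.induction_on with
    | C c => rw [aeval_C]; exact hK c
    | add p q hp hq => rw [map_add]; exact hp.add hq
    | mul_X p j hp => rw [map_mul, aeval_X]; exact hp.mul (hξ j)
  refine ⟨fun z => ?_⟩
  obtain ⟨p, q, rfl⟩ := hgen z
  rw [div_eq_mul_inv]
  exact (h p).mul (h q).inv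

/-- At the generic point of a component of the zero set of `in_L(I_A)`, the coordinates indexed by
a set of linearly independent columns generate the function field up to algebraic extensions. -/
theorem trdeg_le_of_aeval_eq_zero {n d : ℕ} (A : Matrix (Fin d) (Fin n) ℤ) (L : Fin n → ℚ)
    {K : Type} [Field K] [Algebra (MvPolynomial (Fin n) ℂ) K] {F : Type} [Field F] [Algebra K F]
    (ξ : Fin n → F) (hgen : ∀ z : F, ∃ p q : MvPolynomial (Fin n) K, z = aeval ξ p / aeval ξ q)
    (hξ : ∀ f ∈ grIdealFrac A L K, aeval ξ f = 0) : Algebra.trdeg K F ≤ d := by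
  classical
  obtain ⟨b, hbσ, hli, hspan⟩ := exists_basis_columns A {j | ξ j ≠ 0}
  have hR : ∀ k ∈ b, IsAlgebraic (Algebra.adjoin K (ξ '' b)) (ξ k) := fun k hk =>
    isAlgebraic_algebraMap (⟨ξ k, Algebra.subset_adjoin ⟨k, hk, rfl⟩⟩ : Algebra.adjoin K (ξ '' b))
  have : Algebra.IsAlgebraic (Algebra.adjoin K (ξ '' b)) F := by
    refine isAlgebraic_of_generators ξ hgen (fun c => ?_) fun j => ?_
    · exact isAlgebraic_algebraMap (algebraMap K (Algebra.adjoin K (ξ '' b)) c)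
    · by_cases h0 : ξ j = 0
      · rw [h0]; exact isAlgebraic_zero
      · exact isAlgebraic_of_mem_span A ξ (monomial_eval_eq A L ξ hξ) b hbσ j (hspan j h0) hR
  refine (Algebra.IsAlgebraic.trdeg_le_cardinalMk K (ξ '' b)).trans ?_
  refine Cardinal.mk_image_le.trans ?_
  have := Fintype.ofFinite b
  rw [Cardinal.mk_fintype]
  have h1 : LinearIndependent ℚ fun k : b => ratCol A k := hli
  have := h1.fintype_card_le_finrank
  rw [Module.finrank_fin_fun] at this
  exact_mod_cast this

/-- A point of the zero set of `in_L(I_A)` and of the Euler operators generates an algebraic extension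
of `ℂ(x)`.

Let `b` index a basis of the columns at which `ξ` does not vanish. The extension is algebraic over
`ℂ(ξ_j (j ∈ b), x_j (j ∉ b))`: the binomial relations give the remaining `ξ_j`, and then the Euler
equations can be solved for the `x_k`, `k ∈ b`. So its transcendence degree over `ℂ` is at most
`n`, which `ℂ(x)` already attains. -/
theorem isAlgebraic_of_aeval_euler_eq_zero {n d : ℕ} (A : Matrix (Fin d) (Fin n) ℤ) (L : Fin n → ℚ)
    {K : Type} [Field K] [Algebra (MvPolynomial (Fin n) ℂ) K]
    [IsFractionRing (MvPolynomial (Fin n) ℂ) K] {F : Type} [Field F] [Algebra K F]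
    (ξ : Fin n → F) (hgen : ∀ z : F, ∃ p q : MvPolynomial (Fin n) K, z = aeval ξ p / aeval ξ q)
    (hξ : ∀ f ∈ grIdealFrac A L K, aeval ξ f = 0) (hE : ∀ i, aeval ξ (eulerFrac A K i) = 0) :
    Algebra.IsAlgebraic K F := by
  classical
  let : Algebra (MvPolynomial (Fin n) ℂ) F :=
    ((algebraMap K F).comp (algebraMap (MvPolynomial (Fin n) ℂ) K)).toAlgebra
  have : IsScalarTower (MvPolynomial (Fin n) ℂ) K F := IsScalarTower.of_algebraMap_eq fun _ => rfl
  let : Algebra ℂ F := ((algebraMap (MvPolynomial (Fin n) ℂ) F).comp C).toAlgebra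
  have : IsScalarTower ℂ (MvPolynomial (Fin n) ℂ) F := IsScalarTower.of_algebraMap_eq fun _ => rfl
  have hinj : Function.Injective (algebraMap (MvPolynomial (Fin n) ℂ) F) :=
    (algebraMap K F).injective.comp (IsFractionRing.injective _ K)
  have : FaithfulSMul (MvPolynomial (Fin n) ℂ) F := (faithfulSMul_iff_algebraMap_injective _ _).2 hinj
  have : CharZero F := charZero_of_injective_algebraMap (R := ℂ) (algebraMap ℂ F).injective
  set x : Fin n → F := fun j => algebraMap (MvPolynomial (Fin n) ℂ) F (X j) with hx
  have hx0 : ∀ j, x j ≠ 0 := fun j h => X_ne_zero j (hinj (h.trans (map_zero _).symm))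
  obtain ⟨b, hbσ, hli, hspan⟩ := exists_basis_columns A {j | ξ j ≠ 0}
  -- `n` elements over which everything is algebraic
  set y : Fin n → F := fun j => if j ∈ b then ξ j else x j with hy
  have hyalg : ∀ j, IsAlgebraic (Algebra.adjoin ℂ (Set.range y)) (y j) := fun j =>
    isAlgebraic_algebraMap
      (⟨y j, Algebra.subset_adjoin ⟨j, rfl⟩⟩ : Algebra.adjoin ℂ (Set.range y))
  have hξb : ∀ k ∈ b, IsAlgebraic (Algebra.adjoin ℂ (Set.range y)) (ξ k) := by
    intro k hk
    have := hyalg k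
    simpa [hy, hk] using this
  have hξalg : ∀ j, IsAlgebraic (Algebra.adjoin ℂ (Set.range y)) (ξ j) := by
    intro j
    by_cases h0 : ξ j = 0
    · rw [h0]; exact isAlgebraic_zero
    · exact isAlgebraic_of_mem_span A ξ (monomial_eval_eq A L ξ hξ) b hbσ j (hspan j h0) hξb
  have hE' : ∀ i, ∑ j, (A i j : F) * (ξ j * x j) = 0 := by
    intro i
    rw [← hE i, eulerFrac, map_sum]
    refine Finset.sum_congr rfl fun j _ => ?_
    rw [map_mul, map_mul, aeval_C, aeval_X, map_intCast, hx]
    simp only [IsScalarTower.algebraMap_apply (MvPolynomial (Fin n) ℂ) K F]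
    ring
  have hxalg : ∀ j, IsAlgebraic (Algebra.adjoin ℂ (Set.range y)) (x j) := by
    intro k
    by_cases hk : k ∈ b
    · -- a combination of the Euler equations expresses `ξ_k x_k` through the `ξ_j x_j`, `j ∉ b`
      obtain ⟨c, hc1, hc0⟩ := exists_dual_functional A b hli k hk
      have hsum : ∑ j, ((∑ i, c i * A i j : ℚ) : F) * (ξ j * x j) = 0 := by
        have : ∀ j, ((∑ i, c i * A i j : ℚ) : F) * (ξ j * x j)
            = ∑ i, (c i : F) * ((A i j : F) * (ξ j * x j)) := by
          intro j
          push_cast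
          rw [Finset.sum_mul]
          exact Finset.sum_congr rfl fun i _ => by ring
        simp only [this]
        rw [Finset.sum_comm]
        simp only [← Finset.mul_sum, hE', mul_zero, Finset.sum_const_zero]
      rw [← Finset.add_sum_erase _ _ (Finset.mem_univ k), hc1, Rat.cast_one, one_mul] at hsum
      have hrest : IsAlgebraic (Algebra.adjoin ℂ (Set.range y))
          (∑ j ∈ Finset.univ.erase k, ((∑ i, c i * A i j : ℚ) : F) * (ξ j * x j)) := by
        refine Finset.sum_induction _ (IsAlgebraic (Algebra.adjoin ℂ (Set.range y)))
          (fun _ _ => IsAlgebraic.add) isAlgebraic_zero ?_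
        intro j hj
        by_cases hjb : j ∈ b
        · rw [hc0 j hjb (Finset.ne_of_mem_erase hj), Rat.cast_zero, zero_mul]
          exact isAlgebraic_zero
        · have hxj := hyalg j
          simp only [hy, hjb, if_false] at hxj
          refine IsAlgebraic.mul ?_ ((hξalg j).mul hxj)
          rw [← map_ratCast (algebraMap ℂ F)]
          exact isAlgebraic_algebraMap (algebraMap ℂ (Algebra.adjoin ℂ (Set.range y)) _)
      have : x k = -(∑ j ∈ Finset.univ.erase k, ((∑ i, c i * A i j : ℚ) : F) * (ξ j * x j))
          * (ξ k)⁻¹ := by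
        rw [eq_mul_inv_iff_mul_eq₀ (hbσ hk)]
        linear_combination hsum
      rw [this]
      exact hrest.neg.mul (hξalg k).inv
    · have := hyalg k
      simpa [hy, hk] using this
  have hS : ∀ s : MvPolynomial (Fin n) ℂ,
      IsAlgebraic (Algebra.adjoin ℂ (Set.range y)) (algebraMap _ F s) := by
    intro s
    induction s using MvPolynomial.induction_on with
    | C c => exact isAlgebraic_algebraMap (algebraMap ℂ (Algebra.adjoin ℂ (Set.range y)) c)
    | add p q hp hq => rw [map_add]; exact hp.add hq
    | mul_X p j hp => rw [map_mul]; exact hp.mul (hxalg j)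
  have : Algebra.IsAlgebraic (Algebra.adjoin ℂ (Set.range y)) F := by
    refine isAlgebraic_of_generators ξ hgen (fun c => ?_) hξalg
    obtain ⟨s, t, -, rfl⟩ := IsFractionRing.div_surjective (A := MvPolynomial (Fin n) ℂ) c
    rw [map_div₀, ← IsScalarTower.algebraMap_apply, ← IsScalarTower.algebraMap_apply,
      div_eq_mul_inv]
    exact (hS s).mul (hS t).inv
  have htr : Algebra.trdeg ℂ F ≤ n := by
    refine (Algebra.IsAlgebraic.trdeg_le_cardinalMk ℂ (Set.range y)).trans ?_
    refine Cardinal.mk_range_le.trans ?_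
    simp
  -- `ℂ(x)` already has transcendence degree `n` over `ℂ`
  rw [← trdeg_add_eq ℂ (MvPolynomial (Fin n) ℂ), MvPolynomial.trdeg_of_isDomain] at htr
  simp only [Cardinal.mk_fin, Cardinal.lift_natCast] at htr
  have h0 : Algebra.trdeg (MvPolynomial (Fin n) ℂ) F = 0 := by
    have hlt : Algebra.trdeg (MvPolynomial (Fin n) ℂ) F < Cardinal.aleph0 :=
      (le_add_self.trans htr).trans_lt (Cardinal.natCast_lt_aleph0)
    obtain ⟨t, ht⟩ := Cardinal.lt_aleph0.1 hlt
    rw [ht] at htr ⊢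
    norm_cast at htr ⊢
    omega
  have := trdeg_eq_zero_iff.1 h0
  exact Algebra.IsAlgebraic.extendScalars (IsFractionRing.injective (MvPolynomial (Fin n) ℂ) K)

/-- A finitely generated domain over `K` embeds in a field generated by the images `ξ_j` of its
generators. -/
theorem exists_generic_point {n : ℕ} {K B : Type} [Field K] [CommRing B] [IsDomain B] [Algebra K B]
    (π : MvPolynomial (Fin n) K →ₐ[K] B) (hπ : Function.Surjective π) :
    ∃ ξ : Fin n → FractionRing B, (∀ f, π f = 0 → aeval ξ f = 0) ∧
      ∀ z, ∃ p q : MvPolynomial (Fin n) K, z = aeval ξ p / aeval ξ q := by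
  have hψ : ∀ f, aeval (fun j => algebraMap B (FractionRing B) (π (X j))) f =
      algebraMap B (FractionRing B) (π f) := by
    intro f
    have h1 := (aeval_unique ((IsScalarTower.toAlgHom K B (FractionRing B)).comp π)).symm
    exact AlgHom.congr_fun h1 f
  refine ⟨fun j => algebraMap B (FractionRing B) (π (X j)), fun f hf => ?_, fun z => ?_⟩
  · rw [hψ, hf, map_zero]
  · obtain ⟨a, c, -, rfl⟩ := IsFractionRing.div_surjective (A := B) z
    obtain ⟨p, rfl⟩ := hπ a
    obtain ⟨q, rfl⟩ := hπ c
    exact ⟨p, q, by rw [hψ, hψ]⟩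

/-- Integral domains that are quotients of `ℂ(x)[∂]/in_L(I_A)` have transcendence degree at most
`d` over `ℂ(x)`. -/
theorem trdeg_le_of_surjective_of_grIdealFrac {n d : ℕ} (A : Matrix (Fin d) (Fin n) ℤ)
    (L : Fin n → ℚ) {K B : Type} [Field K] [Algebra (MvPolynomial (Fin n) ℂ) K]
    [CommRing B] [IsDomain B] [Algebra K B]
    (π : MvPolynomial (Fin n) K →ₐ[K] B) (hπ : Function.Surjective π)
    (h : ∀ f ∈ grIdealFrac A L K, π f = 0) : Algebra.trdeg K B ≤ d := by
  obtain ⟨ξ, hξ, hgen⟩ := exists_generic_point π hπ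
  refine le_trans ?_ (trdeg_le_of_aeval_eq_zero A L ξ hgen fun f hf => hξ f (h f hf))
  exact trdeg_le_of_injective (IsScalarTower.toAlgHom K B (FractionRing B))
    (IsFractionRing.injective B (FractionRing B))

/-- Integral domains that are quotients of `ℂ(x)[∂]/(in_L(I_A) + ⟨E₁, …, E_d⟩)` are fields. -/
theorem isField_of_surjective_of_euler {n d : ℕ} (A : Matrix (Fin d) (Fin n) ℤ)
    (L : Fin n → ℚ) {K B : Type} [Field K] [Algebra (MvPolynomial (Fin n) ℂ) K]
    [IsFractionRing (MvPolynomial (Fin n) ℂ) K] [CommRing B] [IsDomain B] [Algebra K B]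
    (π : MvPolynomial (Fin n) K →ₐ[K] B) (hπ : Function.Surjective π)
    (h : ∀ f ∈ grIdealFrac A L K, π f = 0) (hE : ∀ i, π (eulerFrac A K i) = 0) : IsField B := by
  obtain ⟨ξ, hξ, hgen⟩ := exists_generic_point π hπ
  have := isAlgebraic_of_aeval_euler_eq_zero A L ξ hgen (fun f hf => hξ f (h f hf))
    (fun i => hξ _ (hE i))
  have : Algebra.IsAlgebraic K B := Algebra.IsAlgebraic.of_injective
    (IsScalarTower.toAlgHom K B (FractionRing B)) (IsFractionRing.injective B (FractionRing B))
  have : Algebra.IsIntegral K B := Algebra.isAlgebraic_iff_isIntegral.1 this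
  exact isField_of_isIntegral_of_isField' (Field.toIsField K)

theorem ringKrullDim_quotient_grIdealFrac_le {n d : ℕ} (A : Matrix (Fin d) (Fin n) ℤ)
    (L : Fin n → ℚ) (K : Type) [Field K] [Algebra (MvPolynomial (Fin n) ℂ) K]
    [Nontrivial (MvPolynomial (Fin n) K ⧸ grIdealFrac A L K)] :
    ringKrullDim (MvPolynomial (Fin n) K ⧸ grIdealFrac A L K) ≤ d := by
  refine ringKrullDim_le_of_forall_trdeg_le K _ d fun P hP => ?_
  exact trdeg_le_of_surjective_of_grIdealFrac A L
    ((Ideal.Quotient.mkₐ K P).comp (Ideal.Quotient.mkₐ K _))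
    (Ideal.Quotient.mk_surjective.comp Ideal.Quotient.mk_surjective)
    fun f hf => by simp [Ideal.Quotient.eq_zero_iff_mem.2 hf]

theorem ringKrullDim_quotient_euler {n d : ℕ} (A : Matrix (Fin d) (Fin n) ℤ)
    (L : Fin n → ℚ) (K : Type) [Field K] [Algebra (MvPolynomial (Fin n) ℂ) K]
    [IsFractionRing (MvPolynomial (Fin n) ℂ) K]
    [Nontrivial (MvPolynomial (Fin n) K ⧸
      (grIdealFrac A L K ⊔ Ideal.span (Set.range (eulerFrac A K))))] :
    ringKrullDim (MvPolynomial (Fin n) K ⧸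
      (grIdealFrac A L K ⊔ Ideal.span (Set.range (eulerFrac A K)))) = 0 := by
  have : Ring.KrullDimLE 0 (MvPolynomial (Fin n) K ⧸
      (grIdealFrac A L K ⊔ Ideal.span (Set.range (eulerFrac A K)))) := by
    refine Ring.KrullDimLE.mk₀ fun P hP => ?_
    refine Ideal.Quotient.maximal_of_isField _ (isField_of_surjective_of_euler A L
      (B := (MvPolynomial (Fin n) K ⧸ _) ⧸ P) ((Ideal.Quotient.mkₐ K P).comp (Ideal.Quotient.mkₐ K _))
      (Ideal.Quotient.mk_surjective.comp Ideal.Quotient.mk_surjective) (fun f hf => ?_) fun i => ?_)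
    · simp [Ideal.Quotient.eq_zero_iff_mem.2 (Ideal.mem_sup_left hf)]
    · simp [Ideal.Quotient.eq_zero_iff_mem.2
        (Ideal.mem_sup_right (Ideal.subset_span (Set.mem_range_self i)))]
  exact ringKrullDimZero_iff_ringKrullDim_eq_zero.1 this

/-! ### Pointedness -/

/-- Since `ℕA` is pointed and the columns of `A` are nonzero, `0` has `0` as its only `A`-preimage
in `ℕⁿ`. -/
theorem eq_zero_of_mulVec_eq_zero {n d : ℕ} (A : Matrix (Fin d) (Fin n) ℤ)
    (hcols : ∀ j, (fun i => A i j) ≠ 0) (hpointed : IsPointed A) (v : Fin n →₀ ℕ)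
    (hv : A.mulVec (fun j => (v j : ℤ)) = 0) : v = 0 := by
  have hcol : ∀ j, (fun i => A i j) ∈ AddSubmonoid.closure (cols A) := fun j =>
    AddSubmonoid.subset_closure (Set.mem_range_self j)
  have hmem : ∀ v : Fin n →₀ ℕ, A.mulVec (fun j => (v j : ℤ)) ∈ AddSubmonoid.closure (cols A) := by
    intro v
    have : A.mulVec (fun j => (v j : ℤ)) = ∑ j, v j • (fun i => A i j) := by
      ext i
      simp [Matrix.mulVec, dotProduct, mul_comm]
    rw [this]
    exact sum_mem fun j _ => nsmul_mem (hcol j) _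
  ext j
  by_contra hj
  have hj : 1 ≤ v j := Nat.one_le_iff_ne_zero.2 hj
  refine hcols j (hpointed (fun i => A i j) (hcol j) ?_)
  have h1 : -(fun i => A i j) = A.mulVec (fun k => ((v - Finsupp.single j 1 : Fin n →₀ ℕ) k : ℤ)) := by
    have : (fun k => (v k : ℤ)) = (fun k => ((v - Finsupp.single j 1 : Fin n →₀ ℕ) k : ℤ)) + Pi.single j 1 := by
      ext k
      by_cases hk : k = j
      · subst hk; simp; omega
      · simp [hk, Finsupp.single_apply, Ne.symm hk]
    rw [this, Matrix.mulVec_add, Matrix.mulVec_single_one] at hv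
    rw [← sub_eq_zero, ← neg_eq_zero, ← hv]
    ext i
    simp [Matrix.col]
  rw [h1]
  exact hmem _

/-- Every element of `I_A` has zero constant term. -/
theorem toricIdeal_constantCoeff {n d : ℕ} (A : Matrix (Fin d) (Fin n) ℤ)
    (hcols : ∀ j, (fun i => A i j) ≠ 0) (hpointed : IsPointed A) (f : MvPolynomial (Fin n) ℂ)
    (hf : f ∈ toricIdeal A) : coeff 0 f = 0 := by
  classical
  have hzero := eq_zero_of_mulVec_eq_zero A hcols hpointed
  have : toricIdeal A ≤ RingHom.ker (constantCoeff (R := ℂ) (σ := Fin n)) := by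
    refine Ideal.span_le.2 ?_
    rintro _ ⟨u, v, huv, rfl⟩
    by_cases hu : u = 0
    · subst hu
      have : v = 0 := hzero v (by rw [← huv]; exact Matrix.mulVec_zero A)
      simp [this]
    · have hv : v ≠ 0 := by
        rintro rfl
        exact hu (hzero u (by rw [huv]; exact Matrix.mulVec_zero A))
      simp [RingHom.mem_ker, constantCoeff_eq, coeff_monomial, hu, hv]
  exact this hf

/-- The origin is a common zero of `in_L(I_A)` and the Euler operators. -/
theorem nontrivial_quotient_euler {n d : ℕ} (A : Matrix (Fin d) (Fin n) ℤ)
    (hcols : ∀ j, (fun i => A i j) ≠ 0) (hpointed : IsPointed A)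
    (L : Fin n → ℚ) (K : Type) [Field K] [Algebra (MvPolynomial (Fin n) ℂ) K] :
    Nontrivial (MvPolynomial (Fin n) K ⧸
      (grIdealFrac A L K ⊔ Ideal.span (Set.range (eulerFrac A K)))) := by
  refine Ideal.Quotient.nontrivial_iff.2 fun htop => ?_
  have hle : grIdealFrac A L K ⊔ Ideal.span (Set.range (eulerFrac A K)) ≤
      RingHom.ker (constantCoeff (R := K) (σ := Fin n)) := by
    refine sup_le (Ideal.map_le_iff_le_comap.2 (Ideal.span_le.2 ?_)) (Ideal.span_le.2 ?_)
    · rintro _ ⟨f, hf, -, rfl⟩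
      have : coeff 0 (initialForm L f) = 0 := by
        rw [initialForm_coeff, toricIdeal_constantCoeff A hcols hpointed f hf]
        split_ifs <;> rfl
      simp [RingHom.mem_ker, toFracPoly, constantCoeff_map, constantCoeff_eq, this]
    · rintro _ ⟨i, rfl⟩
      simp [RingHom.mem_ker, eulerFrac]
  have h1 : (1 : MvPolynomial (Fin n) K) ∈ RingHom.ker (constantCoeff (R := K) (σ := Fin n)) :=
    hle (htop ▸ Submodule.mem_top)
  simp [RingHom.mem_ker] at h1

/-! ### A vertex of the polyhedron of feasible functionals -/

theorem exists_multiplier {ι : Type*} [Finite ι] (p q : ι → ℚ) (hq : ∀ i, 0 < q i) :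
    ∃ N : ℚ, ∀ i, p i < N * q i := by
  obtain ⟨M, hM⟩ := (Set.finite_range fun i => p i / q i).bddAbove
  refine ⟨M + 1, fun i => ?_⟩
  rw [← div_lt_iff₀ (hq i)]
  exact (hM ⟨i, rfl⟩).trans_lt (lt_add_one M)

/-- **Gordan's theorem** over `ℚ`: finitely many vectors either lie in an open half space or satisfy
a nontrivial relation with nonnegative coefficients. -/
theorem exists_pos_dual_or_exists_nonneg_relation {V : Type*} [AddCommGroup V] [Module ℚ V] {n : ℕ}
    (a : Fin n → V) :
    (∃ h : Module.Dual ℚ V, ∀ j, 0 < h (a j)) ∨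
      ∃ c : Fin n → ℚ, (∀ j, 0 ≤ c j) ∧ c ≠ 0 ∧ ∑ j, c j • a j = 0 := by
  induction n generalizing V with
  | zero => exact Or.inl ⟨0, fun j => j.elim0⟩
  | succ n ih =>
    by_cases hv : a 0 = 0
    · right
      refine ⟨Pi.single 0 1, fun j => ?_, by simp, ?_⟩
      · by_cases hj : j = 0
        · subst hj; simp
        · simp [hj]
      · rw [Fin.sum_univ_succ]; simp [hv]
    rcases ih fun j => (Submodule.span ℚ {a 0}).mkQ (a j.succ) with ⟨h, hh⟩ | ⟨c, hc, hc0, hrel⟩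
    · -- `h` vanishes on `a 0`: add to a large multiple of it a functional positive on `a 0`
      left
      obtain ⟨g, hg⟩ := Module.Projective.exists_dual_eq_one ℚ hv
      obtain ⟨N, hN⟩ := exists_multiplier (fun j => -g (a (Fin.succ j))) _ hh
      refine ⟨g + N • h.comp (Submodule.mkQ _), Fin.cases ?_ fun j => ?_⟩
      · have : (Submodule.span ℚ {a 0}).mkQ (a 0) = 0 := by
          simp [Submodule.mem_span_singleton_self]
        simp [hg, this]
      · have := hN j
        simp only [LinearMap.add_apply, LinearMap.smul_apply, LinearMap.comp_apply, smul_eq_mul]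
        linarith
    · have hmem : ∑ j, c j • a j.succ ∈ Submodule.span ℚ {a 0} := by
        rw [← Submodule.Quotient.mk_eq_zero, ← Submodule.mkQ_apply, map_sum, ← hrel]
        simp
      obtain ⟨s, hs⟩ := Submodule.mem_span_singleton.1 hmem
      rcases le_or_gt s 0 with hs0 | hs0
      · right
        refine ⟨Fin.cons (-s) c, fun j => ?_, fun h => hc0 ?_, ?_⟩
        · refine Fin.cases ?_ (fun j => ?_) j
          · simpa using hs0
          · simpa using hc j
        · ext j
          simpa using congrFun h j.succ
        · rw [Fin.sum_univ_succ]
          simp [← hs]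
      · rcases ih fun j => a j.succ with ⟨h, hh⟩ | ⟨c', hc', hc0', hrel'⟩
        · left
          refine ⟨h, Fin.cases ?_ hh⟩
          have h1 := congrArg h hs
          simp only [map_smul, map_sum, smul_eq_mul] at h1
          have h2 : 0 < ∑ j, c j * h (a j.succ) := by
            obtain ⟨k, hk⟩ := Function.ne_iff.1 hc0
            exact Finset.sum_pos' (fun j _ => mul_nonneg (hc j) (hh j).le)
              ⟨k, Finset.mem_univ _, mul_pos (lt_of_le_of_ne (hc k) (Ne.symm hk)) (hh k)⟩
          rw [← h1] at h2
          exact pos_of_mul_pos_right h2 hs0.le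
        · right
          refine ⟨Fin.cons 0 c', fun j => ?_, fun h => hc0' ?_, ?_⟩
          · refine Fin.cases ?_ (fun j => ?_) j
            · simp
            · simpa using hc' j
          · ext j
            simpa using congrFun h j.succ
          · rw [Fin.sum_univ_succ]
            simpa using hrel'

/-- A pointed semigroup generated by nonzero vectors lies in an open half space, except for `0`. -/
theorem exists_pos_dual {n d : ℕ} (A : Matrix (Fin d) (Fin n) ℤ)
    (hcols : ∀ j, (fun i => A i j) ≠ 0) (hpointed : IsPointed A) :
    ∃ h : Module.Dual ℚ (Fin d → ℚ), ∀ j, 0 < h (ratCol A j) := by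
  refine (exists_pos_dual_or_exists_nonneg_relation (ratCol A)).resolve_right ?_
  rintro ⟨c, hc, hc0, hrel⟩
  obtain ⟨N, hN, m, hm⟩ := exists_common_denominator c
  have hN' : (0 : ℚ) < N := by exact_mod_cast hN
  have hm0 : ∀ j, 0 ≤ m j := by
    intro j
    have : (0 : ℚ) ≤ m j := by rw [hm]; exact mul_nonneg hN'.le (hc j)
    exact_mod_cast this
  have hv := eq_zero_of_mulVec_eq_zero A hcols hpointed
    (Finsupp.equivFunOnFinite.symm fun j => (m j).toNat) (by
      ext i
      have h1 := congrFun hrel i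
      simp only [Finset.sum_apply, Pi.smul_apply, smul_eq_mul, ratCol, Pi.zero_apply] at h1
      have h2 : ((∑ j, A i j * m j : ℤ) : ℚ) = 0 := by
        push_cast
        rw [← mul_zero (N : ℚ), ← h1, Finset.mul_sum]
        exact Finset.sum_congr rfl fun j _ => by rw [hm]; ring
      simpa [Matrix.mulVec, dotProduct, hm0] using (by exact_mod_cast h2 : ∑ j, A i j * m j = 0))
  refine hc0 (funext fun j => ?_)
  have h1 := DFunLike.congr_fun hv j
  simp only [Finsupp.equivFunOnFinite_symm_apply_apply, Finsupp.coe_zero, Pi.zero_apply] at h1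
  have h2 : m j = 0 := by have := hm0 j; omega
  have h3 := hm j
  rw [h2, Int.cast_zero] at h3
  simpa [hN'.ne'] using h3.symm

theorem span_range_ratCol {n d : ℕ} (A : Matrix (Fin d) (Fin n) ℤ)
    (hZA : AddSubgroup.closure (cols A) = ⊤) :
    Submodule.span ℚ (Set.range (ratCol A)) = ⊤ := by
  let φ : (Fin d → ℤ) →+ (Fin d → ℚ) := (Int.castAddHom ℚ).compLeft (Fin d)
  have h : AddSubgroup.closure (cols A) ≤
      (Submodule.span ℚ (Set.range (ratCol A))).toAddSubgroup.comap φ := by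
    rw [AddSubgroup.closure_le]
    rintro _ ⟨j, rfl⟩
    exact Submodule.subset_span ⟨j, rfl⟩
  rw [hZA] at h
  rw [eq_top_iff, ← (Pi.basisFun ℚ (Fin d)).span_eq, Submodule.span_le]
  rintro _ ⟨i, rfl⟩
  have h1 : φ (Pi.single i 1) ∈ Submodule.span ℚ (Set.range (ratCol A)) :=
    h (AddSubgroup.mem_top (Pi.single i 1))
  have h2 : φ (Pi.single i 1) = Pi.basisFun ℚ (Fin d) i := by
    ext k
    by_cases hk : k = i
    · subst hk; simp [φ]
    · simp [φ, hk]
  rwa [h2] at h1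

/-- The polyhedron `{w | w · a_j ≤ L_j}` has a vertex: it is nonempty because the columns lie in an
open half space, and it contains no line because they span `ℚ^d`. -/
theorem exists_vertex {n d : ℕ} (A : Matrix (Fin d) (Fin n) ℤ)
    (hcols : ∀ j, (fun i => A i j) ≠ 0) (hpointed : IsPointed A)
    (hZA : AddSubgroup.closure (cols A) = ⊤) (L : Fin n → ℚ) :
    ∃ w : Module.Dual ℚ (Fin d → ℚ), (∀ j, w (ratCol A j) ≤ L j) ∧
      Submodule.span ℚ (ratCol A '' {j | w (ratCol A j) = L j}) = ⊤ := by
  classical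
  let tight : Module.Dual ℚ (Fin d → ℚ) → Submodule ℚ (Fin d → ℚ) := fun w =>
    Submodule.span ℚ (ratCol A '' {j | w (ratCol A j) = L j})
  obtain ⟨h, hh⟩ := exists_pos_dual A hcols hpointed
  obtain ⟨N, hN⟩ := exists_multiplier (fun j => -L j) _ hh
  have hne : {w : Module.Dual ℚ (Fin d → ℚ) | ∀ j, w (ratCol A j) ≤ L j}.Nonempty :=
    ⟨-(N • h), fun j => by
      have := hN j
      simp only [LinearMap.neg_apply, LinearMap.smul_apply, smul_eq_mul]
      linarith⟩
  -- a feasible functional whose tight columns span as much as possible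
  obtain ⟨_, ⟨w, hw, rfl⟩, hmax⟩ := (wellFounded_gt (α := Submodule ℚ (Fin d → ℚ))).has_min
    (tight '' {w | ∀ j, w (ratCol A j) ≤ L j}) (hne.image _)
  refine ⟨w, hw, ?_⟩
  by_contra htop
  obtain ⟨f, hf0, hf⟩ := Submodule.exists_le_ker_of_lt_top (tight w) (lt_top_iff_ne_top.2 htop)
  obtain ⟨k, hk⟩ : ∃ k, f (ratCol A k) ≠ 0 := by
    by_contra! hall
    refine hf0 (LinearMap.ker_eq_top.1 ?_)
    rw [eq_top_iff, ← span_range_ratCol A hZA, Submodule.span_le]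
    rintro _ ⟨j, rfl⟩
    exact hall j
  wlog hpos : 0 < f (ratCol A k) generalizing f
  · refine this (-f) (neg_ne_zero.2 hf0) (fun x hx => ?_) (by simpa using hk) ?_
    · have := hf hx
      simp only [LinearMap.mem_ker, LinearMap.neg_apply, neg_eq_zero] at this ⊢
      exact this
    · rw [LinearMap.neg_apply]
      exact neg_pos.2 (lt_of_le_of_ne (not_lt.1 hpos) hk)
  -- move from `w` along `f` until the next constraint becomes tight
  obtain ⟨j₀, hj₀, hmin⟩ := Finset.exists_min_image
    (Finset.univ.filter fun j => 0 < f (ratCol A j))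
    (fun j => (L j - w (ratCol A j)) / f (ratCol A j)) ⟨k, by simpa using hpos⟩
  simp only [Finset.mem_filter, Finset.mem_univ, true_and] at hj₀ hmin
  set t := (L j₀ - w (ratCol A j₀)) / f (ratCol A j₀) with ht
  have ht0 : 0 ≤ t := div_nonneg (sub_nonneg.2 (hw j₀)) hj₀.le
  refine hmax (tight (w + t • f)) ⟨w + t • f, fun j => ?_, rfl⟩ ?_
  · simp only [LinearMap.add_apply, LinearMap.smul_apply, smul_eq_mul]
    rcases le_or_gt (f (ratCol A j)) 0 with hj | hj
    · nlinarith [hw j, mul_nonneg ht0 (neg_nonneg.2 hj)]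
    · have := hmin j hj
      rw [le_div_iff₀ hj] at this
      linarith
  · refine lt_of_le_of_ne (Submodule.span_mono (Set.image_mono fun j hj => ?_)) fun heq => ?_
    · have h1 : f (ratCol A j) = 0 := hf (Submodule.subset_span ⟨j, hj, rfl⟩)
      simpa [h1] using hj
    · have h1 : ratCol A j₀ ∈ tight (w + t • f) := by
        refine Submodule.subset_span ⟨j₀, ?_, rfl⟩
        simp only [Set.mem_ofPred_eq, LinearMap.add_apply, LinearMap.smul_apply, smul_eq_mul, ht]
        rw [div_mul_cancel₀ _ hj₀.ne']
        ring
      rw [← heq] at h1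
      exact hj₀.ne' (hf h1)

/-! ### A torus orbit closure in the zero set -/

open Classical in
/-- For vectors `e_j ∈ ℤ^d` and a set `σ` of indices, the map to the Laurent polynomial ring
`R[t₁^{±1}, …, t_d^{±1}]` sending `X j` to the monomial `t^{e_j}` for `j ∈ σ` and to `0` otherwise. -/
def torusHom {ι : Type} {d : ℕ} (R : Type) [CommRing R] (e : ι → Fin d → ℤ) (σ : Set ι) :
    MvPolynomial ι R →ₐ[R] AddMonoidAlgebra R (Fin d → ℤ) :=
  aeval fun j => if j ∈ σ then AddMonoidAlgebra.single (e j) 1 else 0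

open Classical in
theorem torusHom_monomial {ι : Type} [Fintype ι] {d : ℕ} (R : Type) [CommRing R]
    (e : ι → Fin d → ℤ) (σ : Set ι) (u : ι →₀ ℕ) (c : R) :
    torusHom R e σ (monomial u c) =
      if ∀ j, j ∉ σ → u j = 0 then AddMonoidAlgebra.single (∑ j, u j • e j) c else 0 := by
  rw [torusHom, aeval_monomial, Finsupp.prod_fintype _ _ (by simp)]
  split_ifs with h
  · have h1 : ∀ j, (if j ∈ σ then AddMonoidAlgebra.single (e j) (1 : R) else 0) ^ u j =
        AddMonoidAlgebra.single (u j • e j) 1 := by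
      intro j
      by_cases hj : j ∈ σ
      · rw [if_pos hj, AddMonoidAlgebra.single_pow, one_pow]
      · rw [if_neg hj, h j hj, pow_zero, zero_smul]; rfl
    have h2 : ∀ s : Finset ι, ∏ j ∈ s, AddMonoidAlgebra.single (u j • e j) (1 : R) =
        AddMonoidAlgebra.single (∑ j ∈ s, u j • e j) 1 := by
      intro s
      induction s using Finset.induction_on with
      | empty => rfl
      | insert j s hj ih =>
        rw [Finset.prod_insert hj, Finset.sum_insert hj, ih, AddMonoidAlgebra.single_mul_single,
          one_mul]
    simp only [h1, h2]
    rw [← Algebra.smul_def, AddMonoidAlgebra.smul_single]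
    simp
  · push Not at h
    obtain ⟨j, hj, hu⟩ := h
    rw [Finset.prod_eq_zero (Finset.mem_univ j), mul_zero]
    rw [if_neg hj, zero_pow hu]

open Classical in
theorem torusHom_coeff {ι : Type} [Fintype ι] {d : ℕ} (R : Type) [CommRing R]
    (e : ι → Fin d → ℤ) (σ : Set ι) (p : MvPolynomial ι R) (β : Fin d → ℤ) :
    (torusHom R e σ p).coeff β =
      ∑ u ∈ p.support, if (∀ j, j ∉ σ → u j = 0) ∧ ∑ j, u j • e j = β then p.coeff u else 0 := by
  conv_lhs => rw [p.as_sum, map_sum]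
  rw [AddMonoidAlgebra.coeff_sum, Finsupp.finsetSum_apply]
  refine Finset.sum_congr rfl fun u _ => ?_
  rw [torusHom_monomial]
  by_cases h1 : ∀ j, j ∉ σ → u j = 0
  · rw [if_pos h1]
    rw [AddMonoidAlgebra.coeff_single, Finsupp.single_apply]
    exact if_congr (by tauto) rfl rfl
  · rw [if_neg h1, if_neg fun h => h1 h.1]; rfl

theorem mulVec_eq_sum_smul {n d : ℕ} (A : Matrix (Fin d) (Fin n) ℤ) (u : Fin n →₀ ℕ) :
    A.mulVec (fun j => (u j : ℤ)) = ∑ j, u j • (fun i => A i j) := by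
  ext i
  simp [Matrix.mulVec, dotProduct, mul_comm]

open Classical in
/-- In an element of `I_A` the coefficients of each `A`-degree add up to zero. -/
theorem sum_coeff_eq_zero_of_mem_toricIdeal {n d : ℕ} (A : Matrix (Fin d) (Fin n) ℤ)
    (f : MvPolynomial (Fin n) ℂ) (hf : f ∈ toricIdeal A) (β : Fin d → ℤ) :
    ∑ u ∈ f.support, (if ∑ j, u j • (fun i => A i j) = β then f.coeff u else 0) = 0 := by
  have h : toricIdeal A ≤ RingHom.ker (torusHom ℂ (fun j i => A i j) Set.univ) := by
    refine Ideal.span_le.2 ?_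
    rintro _ ⟨u, v, huv, rfl⟩
    rw [mulVec_eq_sum_smul, mulVec_eq_sum_smul] at huv
    rw [SetLike.mem_coe, RingHom.mem_ker, map_sub, torusHom_monomial, torusHom_monomial,
      if_pos (by simp), if_pos (by simp), sub_eq_zero]
    exact congrArg (AddMonoidAlgebra.single · 1) huv
  have h1 := torusHom_coeff ℂ (fun j i => A i j) Set.univ f β
  rw [show torusHom ℂ (fun j i => A i j) Set.univ f = 0 from h hf] at h1
  simpa using h1.symm

/-- If `w · a_j ≤ L_j` for all `j`, with equality exactly for `j ∈ σ`, then `in_L(I_A)` vanishes on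
the closure of the torus orbit of the point with coordinates `1` on `σ` and `0` off `σ`.

Indeed `w · Au` is a lower bound for the weight of `u`, attained exactly by the `u` supported
on `σ`. So if one term of `g ∈ I_A` in degree `β` contributes to the restriction of its initial
form, then all of them do, and their coefficients add up to zero. -/
theorem torusHom_eq_zero_of_mem_grIdealFrac {n d : ℕ} (A : Matrix (Fin d) (Fin n) ℤ)
    (L : Fin n → ℚ) (K : Type) [Field K] [Algebra (MvPolynomial (Fin n) ℂ) K]
    (w : Module.Dual ℚ (Fin d → ℚ)) (hw : ∀ j, w (ratCol A j) ≤ L j)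
    (f : MvPolynomial (Fin n) K) (hf : f ∈ grIdealFrac A L K) :
    torusHom K (fun j i => A i j) {j | w (ratCol A j) = L j} f = 0 := by
  classical
  set σ : Set (Fin n) := {j | w (ratCol A j) = L j} with hσ
  have hwt : ∀ u : Fin n →₀ ℕ, ∑ j, w (ratCol A j) * u j ≤ wt L u := fun u =>
    Finset.sum_le_sum fun j _ => mul_le_mul_of_nonneg_right (hw j) (Nat.cast_nonneg _)
  have hwt_eq : ∀ u : Fin n →₀ ℕ, ∑ j, w (ratCol A j) * u j = wt L u ↔ ∀ j, j ∉ σ → u j = 0 := by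
    intro u
    rw [wt, Finset.sum_eq_sum_iff_of_le
      fun j _ => mul_le_mul_of_nonneg_right (hw j) (Nat.cast_nonneg _)]
    simp only [Finset.mem_univ, true_imp_iff]
    refine forall_congr' fun j => ⟨fun h hj => ?_, fun h => ?_⟩
    · rcases mul_eq_mul_right_iff.1 h with h | h
      · exact absurd h hj
      · exact_mod_cast h
    · by_cases hj : j ∈ σ
      · rw [show w (ratCol A j) = L j from hj]
      · simp [h hj]
  have hdeg : ∀ u : Fin n →₀ ℕ, ∑ j, w (ratCol A j) * u j =
      w (fun i => ((∑ j, u j • (fun i => A i j) : Fin d → ℤ) i : ℚ)) := by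
    intro u
    have : (fun i => ((∑ j, u j • (fun i => A i j) : Fin d → ℤ) i : ℚ)) =
        ∑ j, (u j : ℚ) • ratCol A j := by
      ext i
      simp [ratCol]
    rw [this, map_sum]
    exact Finset.sum_congr rfl fun j _ => by rw [map_smul, smul_eq_mul, mul_comm]
  have hle : grIdealFrac A L K ≤ RingHom.ker (torusHom K (fun j i => A i j) σ) := by
    refine Ideal.map_le_iff_le_comap.2 (Ideal.span_le.2 ?_)
    rintro _ ⟨g, hg, -, rfl⟩
    change torusHom K (fun j i => A i j) σ (toFracPoly n K (initialForm L g)) = 0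
    refine AddMonoidAlgebra.coeff_injective (Finsupp.ext fun β => ?_)
    have h1 : (torusHom K (fun j i => A i j) σ (toFracPoly n K (initialForm L g))).coeff β =
        algebraMap (MvPolynomial (Fin n) ℂ) K (C (∑ u ∈ g.support,
          if (∀ j, j ∉ σ → u j = 0) ∧ ∑ j, u j • (fun i => A i j) = β then
            (initialForm L g).coeff u else 0)) := by
      have hsub : (toFracPoly n K (initialForm L g)).support ⊆ g.support := by
        intro u hu
        rw [mem_support_iff] at hu ⊢
        intro h0
        refine hu ?_
        rw [toFracPoly, coeff_map, initialForm_coeff, h0, ite_self, map_zero]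
      rw [torusHom_coeff, Finset.sum_subset hsub, map_sum, map_sum]
      · refine Finset.sum_congr rfl fun u _ => ?_
        split_ifs with h
        · rw [toFracPoly, coeff_map]; rfl
        · simp
      · intro u _ hu
        rw [notMem_support_iff.1 hu, ite_self]
    rw [h1]
    have h2 : ∑ u ∈ g.support,
        (if (∀ j, j ∉ σ → u j = 0) ∧ ∑ j, u j • (fun i => A i j) = β then
          (initialForm L g).coeff u else 0) = 0 := by
      by_cases hex : ∃ u ∈ g.support, (∀ j, j ∉ σ → u j = 0) ∧ ∑ j, u j • (fun i => A i j) = β ∧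
          ∀ v ∈ g.support, wt L v ≤ wt L u
      · -- then all terms of degree `β` have maximal weight and are supported on `σ`
        obtain ⟨u₀, -, hu₀σ, hu₀β, hu₀max⟩ := hex
        refine Eq.trans ?_ (sum_coeff_eq_zero_of_mem_toricIdeal A g hg β)
        refine Finset.sum_congr rfl fun u hu => ?_
        by_cases hβ : ∑ j, u j • (fun i => A i j) = β
        · have h3 : ∑ j, w (ratCol A j) * u j = wt L u₀ := by
            rw [← (hwt_eq u₀).2 hu₀σ, hdeg, hdeg, hβ, hu₀β]
          have h4 : wt L u = wt L u₀ := le_antisymm (hu₀max u hu) (h3 ▸ hwt u)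
          rw [if_pos ⟨(hwt_eq u).1 (h3.trans h4.symm), hβ⟩, if_pos hβ, initialForm_coeff, if_pos]
          intro v hv
          rw [h4]
          exact hu₀max v hv
        · rw [if_neg hβ, if_neg fun h => hβ h.2]
      · push Not at hex
        refine Finset.sum_eq_zero fun u hu => ?_
        split_ifs with h
        · obtain ⟨v, hv, hlt⟩ := hex u hu h.1 h.2
          rw [initialForm_coeff, if_neg]
          exact fun hall => absurd (hall v hv) (not_le.2 hlt)
        · rfl
    rw [h2, map_zero, map_zero]
    rfl
  exact hle hf

/-- Distinct monomials in the `X k`, `k ∈ b`, have distinct degrees when the columns `a_k` are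
linearly independent, so no cancellation occurs. -/
theorem torusHom_injective_of_linearIndepOn {n d : ℕ} (A : Matrix (Fin d) (Fin n) ℤ) (K : Type)
    [Field K] (b : Set (Fin n)) (hb : LinearIndepOn ℚ (ratCol A) b) :
    Function.Injective (torusHom K (fun (j : b) i => A i j) Set.univ) := by
  classical
  have := Fintype.ofFinite b
  rw [injective_iff_map_eq_zero]
  intro p hp
  have hinj : ∀ u v : b →₀ ℕ, ∑ j, u j • (fun i => A i j) = ∑ j, v j • (fun i => A i j) → u = v := by
    intro u v huv
    have h1 : ∑ j : b, ((u j : ℚ) - v j) • ratCol A j = 0 := by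
      ext i
      have h2 := congrFun huv i
      simp only [Finset.sum_apply, Pi.smul_apply] at h2
      simp only [nsmul_eq_mul] at h2
      have h3 := congrArg (fun z : ℤ => (z : ℚ)) h2
      push_cast at h3
      simp only [Finset.sum_apply, Pi.smul_apply, smul_eq_mul, ratCol, sub_mul,
        Finset.sum_sub_distrib, Pi.zero_apply]
      exact sub_eq_zero.2 h3
    ext j
    have h3 := Fintype.linearIndependent_iff.1 hb _ h1 j
    rw [sub_eq_zero] at h3
    exact_mod_cast h3
  ext u
  have h1 := torusHom_coeff K (fun (j : b) i => A i j) Set.univ p (∑ j, u j • (fun i => A i j))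
  rw [hp] at h1
  rw [coeff_zero]
  by_contra hu
  rw [Finset.sum_eq_single_of_mem u (mem_support_iff.2 hu)] at h1
  · exact hu (by simpa using h1.symm)
  · intro v _ hvu
    rw [if_neg]
    exact fun h => hvu (hinj v u h.2)

/-- The lower bound: if the columns indexed by `σ` span `ℚ^d`, the torus orbit closure attached to
`σ` has dimension `d`. -/
theorem le_ringKrullDim_quotient_grIdealFrac {n d : ℕ} (A : Matrix (Fin d) (Fin n) ℤ)
    (hcols : ∀ j, (fun i => A i j) ≠ 0) (hpointed : IsPointed A)
    (hZA : AddSubgroup.closure (cols A) = ⊤) (L : Fin n → ℚ)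
    (K : Type) [Field K] [Algebra (MvPolynomial (Fin n) ℂ) K] :
    (d : WithBot ℕ∞) ≤ ringKrullDim (MvPolynomial (Fin n) K ⧸ grIdealFrac A L K) := by
  classical
  obtain ⟨w, hw, hspan⟩ := exists_vertex A hcols hpointed hZA L
  set σ : Set (Fin n) := {j | w (ratCol A j) = L j} with hσ
  let φ := torusHom K (fun j i => A i j) σ
  have hker : ∀ f ∈ grIdealFrac A L K, φ f = 0 :=
    torusHom_eq_zero_of_mem_grIdealFrac A L K w hw
  have hsurj : Function.Surjective φ.rangeRestrict := φ.rangeRestrict_surjective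
  have : Algebra.FiniteType K φ.range := Algebra.FiniteType.of_surjective _ hsurj
  have hT : ringKrullDim φ.range ≤ ringKrullDim (MvPolynomial (Fin n) K ⧸ grIdealFrac A L K) := by
    refine ringKrullDim_le_of_surjective
      (Ideal.Quotient.lift (grIdealFrac A L K) φ.rangeRestrict.toRingHom fun f hf => ?_)
      (Ideal.Quotient.lift_surjective_of_surjective _ _ hsurj)
    exact Subtype.ext (hker f hf)
  refine le_trans ?_ hT
  obtain ⟨b, hbσ, hli, hbspan⟩ := exists_basis_columns A σ
  have := Fintype.ofFinite b
  have hcard : Fintype.card b = d := by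
    have htop : Submodule.span ℚ (Set.range fun k : b => ratCol A k) = ⊤ := by
      rw [eq_top_iff, ← hspan, Submodule.span_le]
      rintro _ ⟨j, hj, rfl⟩
      have := hbspan j hj
      rwa [Set.image_eq_range] at this
    have h1 : LinearIndependent ℚ fun k : b => ratCol A k := hli
    have := Module.finrank_eq_card_basis (Module.Basis.mk h1 htop.ge)
    rw [Module.finrank_fin_fun] at this
    exact this.symm
  -- the monomials `t^{a_k}`, `k ∈ b`, are `d` algebraically independent elements of the range
  have hind : AlgebraicIndependent K fun k : b => φ.rangeRestrict (X (k : Fin n)) := by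
    have h1 : ((φ.range.val).comp (aeval fun k : b => φ.rangeRestrict (X (k : Fin n)))) =
        torusHom K (fun (j : b) i => A i j) Set.univ := by
      refine MvPolynomial.algHom_ext fun k => ?_
      rw [AlgHom.comp_apply, aeval_X]
      change φ (X (k : Fin n)) = _
      simp [φ, torusHom, hbσ k.2]
    have h2 := torusHom_injective_of_linearIndepOn A K b hli
    rw [← h1, AlgHom.coe_comp] at h2
    exact Function.Injective.of_comp h2
  obtain ⟨s, hs, hs'⟩ := exists_ringKrullDim_eq_trdeg K φ.range
  have h3 := hind.cardinalMk_le_trdeg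
  rw [Cardinal.mk_fintype, hcard, hs'] at h3
  rw [hs]
  have h4 : d ≤ s := by exact_mod_cast h3
  exact_mod_cast h4

/-! ### The two dimensions -/

/-- The Euler operators form a linear system of parameters on `ℂ(x)[∂]/in_L(I_A)`:
the quotient by `in_L(I_A)` has Krull dimension `d`, and further quotienting by
`E₁, …, E_d` gives Krull dimension `0`. -/
theorem stmt1 {d n : ℕ} (A : Matrix (Fin d) (Fin n) ℤ)
    (hrank : A.rank = d)
    (hcols : ∀ j, (fun i => A i j) ≠ 0)
    (hpointed : IsPointed A)
    (hZA : AddSubgroup.closure (cols A) = ⊤)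
    (L : Fin n → ℚ) (K : Type) [Field K] [Algebra (MvPolynomial (Fin n) ℂ) K]
    [IsFractionRing (MvPolynomial (Fin n) ℂ) K] :
    ringKrullDim (MvPolynomial (Fin n) K ⧸ grIdealFrac A L K) = (d : WithBot ℕ∞) ∧
    ringKrullDim (MvPolynomial (Fin n) K ⧸
        (grIdealFrac A L K ⊔ Ideal.span (Set.range (eulerFrac A K)))) = (0 : WithBot ℕ∞) := by
  have h2 := nontrivial_quotient_euler A hcols hpointed L K
  have h1 : Nontrivial (MvPolynomial (Fin n) K ⧸ grIdealFrac A L K) := by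
    rw [Ideal.Quotient.nontrivial_iff] at h2 ⊢
    exact fun h => h2 (by rw [h, top_sup_eq])
  exact ⟨le_antisymm (ringKrullDim_quotient_grIdealFrac_le A L K)
    (le_ringKrullDim_quotient_grIdealFrac A hcols hpointed hZA L K),
    ringKrullDim_quotient_euler A L K⟩

end
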